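/- Let G = (V, E, w) be a weighted graph on vertex set {1,...,n} all of whose edge weights satisfy w(e) ∈ [γ, 2γ) for some γ > 0, let α be a positive integer, and partition V into 𝒮 = {u : δ_u ≤ γα} and ℒ = {u : δ_u > γα}, where δ_u = Σ_v w(u,v) is the weighted degree. For u ∈ ℒ set δ_u^ℒ = Σ_{v∈ℒ} w(u,v). Independently for each u ∈ ℒ with δ_u^ℒ > 0, draw α independent samples with replacement from the edges {(u,v) : v ∈ ℒ}, each sample choosing edge (u,v) with probability w(u,v)/δ_u^ℒ, and let Y_u^v be the number of times (u,v) is sampled at u. For x ∈ ℝⁿ define the estimator I_G = Σ_{u∈V} δ_u x_u² − Σ_{u∈𝒮} Σ_{v∈V} x_u x_v w(u,v) − Σ_{u∈ℒ} Σ_{v∈𝒮} x_u x_v w(u,v) − Σ_{u∈ℒ} (δ_u^ℒ/α) Σ_{v∈ℒ} x_u x_v Y_u^v. Then for every x ∈ ℝⁿ: the expectation of I_G equals the Laplacian quadratic form xᵀL(G)x, and the variance of I_G is at most (2/α²)·(Σ_{u∈V} δ_u x_u²)². -/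

import Mathlib

open scoped Classical

/-- Weighted degree of vertex `u`. -/
noncomputable def wdeg {n : ℕ} (w : Fin n → Fin n → ℝ) (u : Fin n) : ℝ :=
  ∑ v, w u v

/-- The heavy vertices ℒ = {u : δ_u > γα}. -/
noncomputable def heavySet {n : ℕ} (w : Fin n → Fin n → ℝ) (γ : ℝ) (α : ℕ) :
    Finset (Fin n) :=
  Finset.univ.filter (fun u => γ * (α : ℝ) < wdeg w u)

/-- The light vertices 𝒮 = {u : δ_u ≤ γα}. -/
noncomputable def lightSet {n : ℕ} (w : Fin n → Fin n → ℝ) (γ : ℝ) (α : ℕ) :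
    Finset (Fin n) :=
  Finset.univ.filter (fun u => wdeg w u ≤ γ * (α : ℝ))

/-- `δ_u^ℒ = Σ_{v ∈ ℒ} w(u,v)`. -/
noncomputable def wdegL {n : ℕ} (w : Fin n → Fin n → ℝ) (γ : ℝ) (α : ℕ) (u : Fin n) : ℝ :=
  ∑ v ∈ heavySet w γ α, w u v

/-- One-sample distribution at vertex `u`: a heavy vertex `u` with `δ_u^ℒ > 0` samples
the edge `(u,v)` (with `v` heavy) with probability `w(u,v)/δ_u^ℒ`; any other vertex
deterministically draws the dummy sample `u` itself. -/
noncomputable def oneProb {n : ℕ} (w : Fin n → Fin n → ℝ) (γ : ℝ) (α : ℕ)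
    (u v : Fin n) : ℝ :=
  if u ∈ heavySet w γ α ∧ 0 < wdegL w γ α u then
    (if v ∈ heavySet w γ α then w u v / wdegL w γ α u else 0)
  else (if v = u then 1 else 0)

/-- Probability of the outcome `ω` of drawing, independently for each vertex `u`,
`α` independent samples. -/
noncomputable def sampleProb {n : ℕ} (w : Fin n → Fin n → ℝ) (γ : ℝ) (α : ℕ)
    (ω : Fin n → Fin α → Fin n) : ℝ :=
  ∏ u, ∏ j, oneProb w γ α u (ω u j)

/-- `Y_u^v`: the number of times the edge `(u, v)` is sampled at `u`. -/
noncomputable def Ycount {n α : ℕ} (ω : Fin n → Fin α → Fin n) (u v : Fin n) : ℕ :=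
  (Finset.univ.filter (fun j : Fin α => ω u j = v)).card

/-- The estimator `I_G` for the Laplacian quadratic form. -/
noncomputable def estI {n : ℕ} (w : Fin n → Fin n → ℝ) (γ : ℝ) (α : ℕ)
    (x : Fin n → ℝ) (ω : Fin n → Fin α → Fin n) : ℝ :=
  ∑ u, wdeg w u * x u ^ 2
    - ∑ u ∈ lightSet w γ α, ∑ v, x u * x v * w u v
    - ∑ u ∈ heavySet w γ α, ∑ v ∈ lightSet w γ α, x u * x v * w u v
    - ∑ u ∈ heavySet w γ α, (wdegL w γ α u / (α : ℝ)) *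
        ∑ v ∈ heavySet w γ α, x u * x v * (Ycount ω u v : ℝ)

/-- The Laplacian quadratic form `xᵀ L(G) x`. -/
noncomputable def qform {n : ℕ} (w : Fin n → Fin n → ℝ) (x : Fin n → ℝ) : ℝ :=
  (1 / 2) * ∑ u, ∑ v, w u v * (x u - x v) ^ 2

/-!
The random part of `estI` is a sum over heavy `u` and over the `α` samples at `u` of independent
terms, so its variance is the sum of their variances, each at most a second moment. Sampling `v`
with probability `w u v / δ_u^ℒ` and rescaling by `δ_u^ℒ / α` makes `α` samples unbiased for
`∑ v ∈ ℒ, x u * x v * w u v`, with `α` times the second moment of one term equal to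
`(δ_u^ℒ / α) * ∑ v ∈ ℒ, w u v * (x u * x v) ^ 2`. Since `v` is heavy, `w u v ≤ 2γ` is at most
`(2 / α) * δ_v`; with `δ_u^ℒ ≤ δ_u` the double sum factors into the square of
`∑ u, δ_u * x u ^ 2`.
-/

section WeightedMean

variable {Ω R ι : Type*} [Fintype Ω]

/-- The expectation of `f` under the weights `p` on a finite type. The weights are arbitrary ring
elements; where `p` has to have total mass one, this is a hypothesis of the lemma. -/
def weightedMean [CommSemiring R] (p f : Ω → R) : R :=
  ∑ ω, p ω * f ω

/-- The variance of `f` under the weights `p`, as the mean squared deviation from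
`weightedMean p f`. -/
def weightedVariance [CommRing R] (p f : Ω → R) : R :=
  weightedMean p fun ω => (f ω - weightedMean p f) ^ 2

section CommSemiring

variable [CommSemiring R]

lemma weightedMean_const {p : Ω → R} (hp : ∑ ω, p ω = 1) (c : R) :
    weightedMean p (fun _ => c) = c := by
  rw [weightedMean, ← Finset.sum_mul, hp, one_mul]

lemma weightedMean_const_mul (p : Ω → R) (c : R) (f : Ω → R) :
    weightedMean p (fun ω => c * f ω) = c * weightedMean p f := by
  simp only [weightedMean, Finset.mul_sum, mul_left_comm]

lemma weightedMean_sum (p : Ω → R) (s : Finset ι) (f : ι → Ω → R) :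
    weightedMean p (fun ω => ∑ i ∈ s, f i ω) = ∑ i ∈ s, weightedMean p (f i) := by
  simp only [weightedMean, Finset.mul_sum]
  exact Finset.sum_comm

end CommSemiring

section CommRing

variable [CommRing R]

lemma weightedMean_sub (p f g : Ω → R) :
    weightedMean p (fun ω => f ω - g ω) = weightedMean p f - weightedMean p g := by
  simp only [weightedMean, mul_sub, Finset.sum_sub_distrib]

lemma weightedMean_sub_weightedMean {p : Ω → R} (hp : ∑ ω, p ω = 1) (f : Ω → R) :
    weightedMean p (fun ω => f ω - weightedMean p f) = 0 := by
  rw [weightedMean_sub, weightedMean_const hp, sub_self]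

lemma weightedVariance_const_sub {p : Ω → R} (hp : ∑ ω, p ω = 1) (c : R) (f : Ω → R) :
    weightedVariance p (fun ω => c - f ω) = weightedVariance p f := by
  simp only [weightedVariance, weightedMean_sub, weightedMean_const hp]
  congr 1
  funext ω
  ring

lemma weightedVariance_eq_sub {p : Ω → R} (hp : ∑ ω, p ω = 1) (f : Ω → R) :
    weightedVariance p f = weightedMean p (fun ω => f ω ^ 2) - weightedMean p f ^ 2 := by
  set m := weightedMean p f with hm
  have expand : ∀ ω, (f ω - m) ^ 2 = f ω ^ 2 - (2 * m * f ω - m ^ 2) := fun ω => by ring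
  simp only [weightedVariance, ← hm, expand, weightedMean_sub, weightedMean_const_mul,
    weightedMean_const hp]
  ring

lemma weightedVariance_le_weightedMean_sq [LinearOrder R] [IsStrictOrderedRing R] {p : Ω → R}
    (hp : ∑ ω, p ω = 1) (f : Ω → R) :
    weightedVariance p f ≤ weightedMean p fun ω => f ω ^ 2 := by
  rw [weightedVariance_eq_sub hp]
  exact sub_le_self _ (sq_nonneg _)

end CommRing

end WeightedMean

section ProductWeight

variable {ι R : Type*} {κ : ι → Type*} [Fintype ι]

/-- The product weights on a finite product of types: under them the coordinates are
independent, the `i`-th one having weights `p i`. -/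
def productWeight [CommSemiring R] (p : ∀ i, κ i → R) (ω : ∀ i, κ i) : R :=
  ∏ i, p i (ω i)

variable [DecidableEq ι] [∀ i, Fintype (κ i)]

section CommSemiring

variable [CommSemiring R] {p : ∀ i, κ i → R}

lemma sum_productWeight (hp : ∀ i, ∑ k, p i k = 1) : ∑ ω, productWeight p ω = 1 := by
  simp only [productWeight, ← Fintype.prod_sum, hp, Finset.prod_const_one]

lemma weightedMean_productWeight_prod (hp : ∀ i, ∑ k, p i k = 1) (s : Finset ι)
    (g : ∀ i, κ i → R) :
    weightedMean (productWeight p) (fun ω => ∏ i ∈ s, g i (ω i)) =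
      ∏ i ∈ s, weightedMean (p i) (g i) := by
  have mean_ite (i : ι) : ∑ k, p i k * (if i ∈ s then g i k else 1) =
      if i ∈ s then weightedMean (p i) (g i) else 1 := by
    split_ifs
    · rfl
    · simp only [mul_one, hp]
  calc weightedMean (productWeight p) (fun ω => ∏ i ∈ s, g i (ω i))
    _ = ∑ ω : ∀ i, κ i, ∏ i, p i (ω i) * (if i ∈ s then g i (ω i) else 1) := by
        simp only [weightedMean, productWeight, Finset.prod_mul_distrib, Finset.prod_ite_mem,
          Finset.univ_inter]
    _ = ∏ i, ∑ k, p i k * (if i ∈ s then g i k else 1) :=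
        (Fintype.prod_sum fun i k => p i k * (if i ∈ s then g i k else 1)).symm
    _ = ∏ i ∈ s, weightedMean (p i) (g i) := by
        simp only [mean_ite, Finset.prod_ite_mem, Finset.univ_inter]

lemma weightedMean_productWeight_apply (hp : ∀ i, ∑ k, p i k = 1) (g : ∀ i, κ i → R) (i : ι) :
    weightedMean (productWeight p) (fun ω => g i (ω i)) = weightedMean (p i) (g i) := by
  simpa only [Finset.prod_singleton] using weightedMean_productWeight_prod hp {i} g

lemma weightedMean_productWeight_apply_mul_apply (hp : ∀ i, ∑ k, p i k = 1) (g : ∀ i, κ i → R)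
    {i j : ι} (hij : i ≠ j) :
    weightedMean (productWeight p) (fun ω => g i (ω i) * g j (ω j)) =
      weightedMean (p i) (g i) * weightedMean (p j) (g j) := by
  simpa only [Finset.prod_pair hij] using weightedMean_productWeight_prod hp {i, j} g

lemma weightedMean_productWeight_sum (hp : ∀ i, ∑ k, p i k = 1) (s : Finset ι)
    (g : ∀ i, κ i → R) :
    weightedMean (productWeight p) (fun ω => ∑ i ∈ s, g i (ω i)) =
      ∑ i ∈ s, weightedMean (p i) (g i) := by
  simp only [weightedMean_sum _ s fun i (ω : ∀ i, κ i) => g i (ω i),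
    weightedMean_productWeight_apply hp g]

end CommSemiring

lemma weightedVariance_productWeight_sum [CommRing R] {p : ∀ i, κ i → R}
    (hp : ∀ i, ∑ k, p i k = 1) (s : Finset ι) (g : ∀ i, κ i → R) :
    weightedVariance (productWeight p) (fun ω => ∑ i ∈ s, g i (ω i)) =
      ∑ i ∈ s, weightedVariance (p i) (g i) := by
  set c : ∀ i, κ i → R := fun i k => g i k - weightedMean (p i) (g i) with hc
  have uncorrelated {i j : ι} (hij : i ≠ j) :
      weightedMean (productWeight p) (fun ω => c i (ω i) * c j (ω j)) = 0 := by
    rw [weightedMean_productWeight_apply_mul_apply hp c hij,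
      weightedMean_sub_weightedMean (hp i), zero_mul]
  calc weightedVariance (productWeight p) (fun ω => ∑ i ∈ s, g i (ω i))
    _ = weightedMean (productWeight p) (fun ω => (∑ i ∈ s, c i (ω i)) ^ 2) := by
        rw [weightedVariance, weightedMean_productWeight_sum hp]
        simp only [hc, Finset.sum_sub_distrib]
    _ = ∑ i ∈ s, ∑ j ∈ s, weightedMean (productWeight p) (fun ω => c i (ω i) * c j (ω j)) := by
        simp only [sq, Finset.sum_mul_sum, weightedMean_sum]
    _ = ∑ i ∈ s, weightedMean (productWeight p) (fun ω => c i (ω i) ^ 2) := by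
        refine Finset.sum_congr rfl fun i hi => ?_
        rw [Finset.sum_eq_single_of_mem i hi fun j _ hji => uncorrelated hji.symm]
        simp only [sq]
    _ = ∑ i ∈ s, weightedVariance (p i) (g i) :=
        Finset.sum_congr rfl fun i _ =>
          weightedMean_productWeight_apply hp (fun i k => c i k ^ 2) i

end ProductWeight

section Estimator

variable {n : ℕ} (w : Fin n → Fin n → ℝ) (γ : ℝ) (α : ℕ)

/-- What a single sample `k` drawn at a heavy vertex `u` contributes to the random part of the
estimator `estI`. -/
noncomputable def sampleTerm (x : Fin n → ℝ) (u k : Fin n) : ℝ :=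
  wdegL w γ α u / α * if k ∈ heavySet w γ α then x u * x k else 0

lemma lightSet_eq_compl_heavySet : lightSet w γ α = (heavySet w γ α)ᶜ := by
  ext u
  simp [lightSet, heavySet]

lemma sum_sampleTerm (x : Fin n → ℝ) (ω : Fin n → Fin α → Fin n) (u : Fin n) :
    ∑ j, sampleTerm w γ α x u (ω u j) =
      wdegL w γ α u / α * ∑ v ∈ heavySet w γ α, x u * x v * (Ycount ω u v : ℝ) := by
  simp only [sampleTerm, ← Finset.mul_sum (a := wdegL w γ α u / α)]
  congr 1
  simp only [Ycount, Finset.card_filter, Nat.cast_sum, Finset.mul_sum]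
  rw [Finset.sum_comm]
  simp

lemma sum_oneProb (u : Fin n) : ∑ v, oneProb w γ α u v = 1 := by
  unfold oneProb
  split_ifs with h
  · rw [Finset.sum_ite_mem, Finset.univ_inter, ← Finset.sum_div]
    exact div_self h.2.ne'
  · simp

lemma sampleProb_eq_productWeight :
    sampleProb w γ α = productWeight fun u => productWeight fun _ : Fin α => oneProb w γ α u :=
  rfl

lemma sum_productWeight_oneProb (u : Fin n) :
    ∑ s, productWeight (fun _ : Fin α => oneProb w γ α u) s = 1 :=
  sum_productWeight fun _ => sum_oneProb w γ α u

variable {w γ α}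

lemma qform_eq_sub (hsym : ∀ u v, w u v = w v u) (x : Fin n → ℝ) :
    qform w x = ∑ u, wdeg w u * x u ^ 2 - ∑ u, ∑ v, x u * x v * w u v := by
  have sum_left : ∑ u, ∑ v, w u v * x u ^ 2 = ∑ u, wdeg w u * x u ^ 2 := by
    simp only [wdeg, Finset.sum_mul]
  have sum_right : ∑ u, ∑ v, w u v * x v ^ 2 = ∑ u, wdeg w u * x u ^ 2 := by
    rw [Finset.sum_comm, ← sum_left]
    simp only [hsym]
  have expand (u v : Fin n) : w u v * (x u - x v) ^ 2 =
      w u v * x u ^ 2 + w u v * x v ^ 2 - 2 * (x u * x v * w u v) := by ring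
  simp only [qform, expand, Finset.sum_add_distrib, Finset.sum_sub_distrib, ← Finset.mul_sum,
    sum_left, sum_right]
  ring

lemma estI_eq_sub (hsym : ∀ u v, w u v = w v u) (x : Fin n → ℝ) (ω : Fin n → Fin α → Fin n) :
    estI w γ α x ω =
      (qform w x + ∑ u ∈ heavySet w γ α, ∑ v ∈ heavySet w γ α, x u * x v * w u v) -
        ∑ u ∈ heavySet w γ α, ∑ j, sampleTerm w γ α x u (ω u j) := by
  have split_sum (f : Fin n → ℝ) :
      ∑ u, f u = ∑ u ∈ lightSet w γ α, f u + ∑ u ∈ heavySet w γ α, f u := by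
    rw [lightSet_eq_compl_heavySet, Finset.sum_compl_add_sum]
  have split_heavy : ∑ u ∈ heavySet w γ α, ∑ v, x u * x v * w u v =
      ∑ u ∈ heavySet w γ α, ∑ v ∈ lightSet w γ α, x u * x v * w u v +
        ∑ u ∈ heavySet w γ α, ∑ v ∈ heavySet w γ α, x u * x v * w u v := by
    rw [← Finset.sum_add_distrib]
    exact Finset.sum_congr rfl fun u _ => split_sum _
  simp only [sum_sampleTerm]
  rw [estI, qform_eq_sub hsym, split_sum fun u => ∑ v, x u * x v * w u v, split_heavy]
  ring

lemma wdegL_mul_weightedMean_oneProb (hnonneg : ∀ u v, 0 ≤ w u v) {u : Fin n}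
    (hu : u ∈ heavySet w γ α) (f : Fin n → ℝ) :
    wdegL w γ α u *
        weightedMean (oneProb w γ α u) (fun v => if v ∈ heavySet w γ α then f v else 0) =
      ∑ v ∈ heavySet w γ α, w u v * f v := by
  have hdeg : 0 ≤ wdegL w γ α u := Finset.sum_nonneg fun v _ => hnonneg u v
  rcases hdeg.eq_or_lt' with hzero | hpos
  · have weight_eq_zero : ∀ v ∈ heavySet w γ α, w u v = 0 :=
      (Finset.sum_eq_zero_iff_of_nonneg fun v _ => hnonneg u v).mp hzero
    rw [hzero, zero_mul, Finset.sum_eq_zero fun v hv => by rw [weight_eq_zero v hv, zero_mul]]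
  · simp only [weightedMean, oneProb, hu, hpos, and_self, if_true, mul_ite, mul_zero,
      Finset.sum_ite_mem, Finset.univ_inter, Finset.mul_sum]
    refine Finset.sum_congr rfl fun v hv => ?_
    rw [if_pos hv]
    field_simp

lemma mul_weightedMean_sampleTerm (hα : 0 < α) (hnonneg : ∀ u v, 0 ≤ w u v) (x : Fin n → ℝ)
    {u : Fin n} (hu : u ∈ heavySet w γ α) :
    α * weightedMean (oneProb w γ α u) (sampleTerm w γ α x u) =
      ∑ v ∈ heavySet w γ α, x u * x v * w u v := by
  have : (α : ℝ) ≠ 0 := by exact_mod_cast hα.ne'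
  simp only [mul_comm _ (w u _)]
  rw [← wdegL_mul_weightedMean_oneProb hnonneg hu]
  unfold sampleTerm
  rw [weightedMean_const_mul]
  field_simp

lemma mul_weightedMean_sampleTerm_sq (hnonneg : ∀ u v, 0 ≤ w u v) (x : Fin n → ℝ)
    {u : Fin n} (hu : u ∈ heavySet w γ α) :
    α * weightedMean (oneProb w γ α u) (fun k => sampleTerm w γ α x u k ^ 2) =
      wdegL w γ α u / α * ∑ v ∈ heavySet w γ α, w u v * (x u * x v) ^ 2 := by
  rw [← wdegL_mul_weightedMean_oneProb hnonneg hu]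
  simp only [sampleTerm, mul_pow, ite_pow, zero_pow two_ne_zero, weightedMean_const_mul]
  field_simp

lemma wdeg_nonneg (hnonneg : ∀ u v, 0 ≤ w u v) (u : Fin n) : 0 ≤ wdeg w u :=
  Finset.sum_nonneg fun v _ => hnonneg u v

lemma wdegL_le_wdeg (hnonneg : ∀ u v, 0 ≤ w u v) (u : Fin n) : wdegL w γ α u ≤ wdeg w u :=
  Finset.sum_le_sum_of_subset_of_nonneg (Finset.subset_univ _) fun v _ _ => hnonneg u v

lemma weight_le_mul_wdeg_of_mem_heavySet (hα : 0 < α) {C : ℝ} (hC : 0 ≤ C) {u v : Fin n}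
    (hle : w u v ≤ C * γ) (hv : v ∈ heavySet w γ α) : w u v ≤ C / α * wdeg w v := by
  have : (α : ℝ) ≠ 0 := by exact_mod_cast hα.ne'
  have heavy : γ * α < wdeg w v := by simpa [heavySet] using hv
  calc w u v
    _ ≤ C * γ := hle
    _ = C / α * (γ * α) := by field_simp
    _ ≤ C / α * wdeg w v := by gcongr

lemma mul_weightedMean_sampleTerm_sq_le (hα : 0 < α) (hnonneg : ∀ u v, 0 ≤ w u v) {C : ℝ}
    (hC : 0 ≤ C) (hle : ∀ u v, w u v ≤ C * γ) (x : Fin n → ℝ) {u : Fin n}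
    (hu : u ∈ heavySet w γ α) :
    α * weightedMean (oneProb w γ α u) (fun k => sampleTerm w γ α x u k ^ 2) ≤
      C / α ^ 2 * (wdeg w u * x u ^ 2 * ∑ v, wdeg w v * x v ^ 2) := by
  rw [mul_weightedMean_sampleTerm_sq hnonneg x hu]
  calc wdegL w γ α u / α * ∑ v ∈ heavySet w γ α, w u v * (x u * x v) ^ 2
    _ ≤ wdeg w u / α * ∑ v ∈ heavySet w γ α, C / α * wdeg w v * (x u * x v) ^ 2 := by
        have weighted_sum_nonneg : 0 ≤ ∑ v ∈ heavySet w γ α, w u v * (x u * x v) ^ 2 :=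
          Finset.sum_nonneg fun v _ => mul_nonneg (hnonneg u v) (sq_nonneg _)
        have := wdeg_nonneg hnonneg u
        gcongr with v hv
        · exact wdegL_le_wdeg hnonneg u
        · exact weight_le_mul_wdeg_of_mem_heavySet hα hC (hle u v) hv
    _ ≤ wdeg w u / α * ∑ v, C / α * wdeg w v * (x u * x v) ^ 2 := by
        have := wdeg_nonneg hnonneg u
        gcongr
        · intro v _ _
          have := wdeg_nonneg hnonneg v
          positivity
        · exact Finset.subset_univ _
    _ = C / α ^ 2 * (wdeg w u * x u ^ 2 * ∑ v, wdeg w v * x v ^ 2) := by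
        simp only [Finset.mul_sum]
        exact Finset.sum_congr rfl fun v _ => by ring

theorem weightedMean_estI (hα : 0 < α) (hsym : ∀ u v, w u v = w v u)
    (hnonneg : ∀ u v, 0 ≤ w u v) (x : Fin n → ℝ) :
    weightedMean (sampleProb w γ α) (estI w γ α x) = qform w x := by
  have mass_one := sum_productWeight_oneProb w γ α
  have mean_vertex (u : Fin n) (hu : u ∈ heavySet w γ α) :
      weightedMean (productWeight fun _ : Fin α => oneProb w γ α u)
          (fun s => ∑ j, sampleTerm w γ α x u (s j)) =
        ∑ v ∈ heavySet w γ α, x u * x v * w u v := by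
    rw [weightedMean_productWeight_sum (fun _ => sum_oneProb w γ α u) _
        fun _ => sampleTerm w γ α x u, Fin.sum_const, nsmul_eq_mul,
      mul_weightedMean_sampleTerm hα hnonneg x hu]
  rw [funext (estI_eq_sub hsym x), sampleProb_eq_productWeight, weightedMean_sub,
    weightedMean_const (sum_productWeight mass_one),
    weightedMean_productWeight_sum mass_one _ fun u s => ∑ j, sampleTerm w γ α x u (s j),
    Finset.sum_congr rfl mean_vertex, add_sub_cancel_right]

lemma weightedVariance_estI (hsym : ∀ u v, w u v = w v u) (x : Fin n → ℝ) :
    weightedVariance (sampleProb w γ α) (estI w γ α x) =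
      ∑ u ∈ heavySet w γ α,
        α * weightedVariance (oneProb w γ α u) (sampleTerm w γ α x u) := by
  have mass_one := sum_productWeight_oneProb w γ α
  rw [funext (estI_eq_sub hsym x), sampleProb_eq_productWeight,
    weightedVariance_const_sub (sum_productWeight mass_one),
    weightedVariance_productWeight_sum mass_one _ fun u s => ∑ j, sampleTerm w γ α x u (s j)]
  refine Finset.sum_congr rfl fun u _ => ?_
  rw [weightedVariance_productWeight_sum (fun _ => sum_oneProb w γ α u) _
    fun _ => sampleTerm w γ α x u, Fin.sum_const, nsmul_eq_mul]

theorem weightedVariance_estI_le (hα : 0 < α) (hsym : ∀ u v, w u v = w v u)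
    (hnonneg : ∀ u v, 0 ≤ w u v) {C : ℝ} (hC : 0 ≤ C) (hle : ∀ u v, w u v ≤ C * γ)
    (x : Fin n → ℝ) :
    weightedVariance (sampleProb w γ α) (estI w γ α x) ≤
      C / α ^ 2 * (∑ u, wdeg w u * x u ^ 2) ^ 2 := by
  have term_nonneg (u : Fin n) : 0 ≤ wdeg w u * x u ^ 2 :=
    mul_nonneg (wdeg_nonneg hnonneg u) (sq_nonneg _)
  have total_nonneg : 0 ≤ ∑ v, wdeg w v * x v ^ 2 := Finset.sum_nonneg fun v _ => term_nonneg v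
  rw [weightedVariance_estI hsym]
  calc ∑ u ∈ heavySet w γ α, α * weightedVariance (oneProb w γ α u) (sampleTerm w γ α x u)
    _ ≤ ∑ u ∈ heavySet w γ α,
          α * weightedMean (oneProb w γ α u) (fun k => sampleTerm w γ α x u k ^ 2) := by
        gcongr with u _
        exact weightedVariance_le_weightedMean_sq (sum_oneProb w γ α u) _
    _ ≤ ∑ u ∈ heavySet w γ α, C / α ^ 2 * (wdeg w u * x u ^ 2 * ∑ v, wdeg w v * x v ^ 2) :=
        Finset.sum_le_sum fun u hu => mul_weightedMean_sampleTerm_sq_le hα hnonneg hC hle x hu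
    _ ≤ ∑ u, C / α ^ 2 * (wdeg w u * x u ^ 2 * ∑ v, wdeg w v * x v ^ 2) :=
        Finset.sum_le_sum_of_subset_of_nonneg (Finset.subset_univ _) fun u _ _ =>
          mul_nonneg (by positivity) (mul_nonneg (term_nonneg u) total_nonneg)
    _ = C / α ^ 2 * (∑ u, wdeg w u * x u ^ 2) ^ 2 := by
        rw [← Finset.mul_sum, ← Finset.sum_mul, sq (∑ u, _)]

end Estimator

theorem stmt_11_general {n : ℕ} {w : Fin n → Fin n → ℝ} {γ : ℝ} {α : ℕ} {C : ℝ}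
    (hα : 0 < α) (hsym : ∀ u v, w u v = w v u) (hnonneg : ∀ u v, 0 ≤ w u v)
    (hC : 0 ≤ C) (hle : ∀ u v, w u v ≤ C * γ) (x : Fin n → ℝ) :
    (∑ ω : Fin n → Fin α → Fin n, sampleProb w γ α ω * estI w γ α x ω) = qform w x ∧
      (∑ ω : Fin n → Fin α → Fin n,
          sampleProb w γ α ω * (estI w γ α x ω - qform w x) ^ 2)
        ≤ C / (α : ℝ) ^ 2 * (∑ u, wdeg w u * x u ^ 2) ^ 2 := by
  have mean_eq : weightedMean (sampleProb w γ α) (estI w γ α x) = qform w x :=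
    weightedMean_estI hα hsym hnonneg x
  have variance_le := weightedVariance_estI_le hα hsym hnonneg hC hle x
  rw [weightedVariance, mean_eq] at variance_le
  exact ⟨mean_eq, variance_le⟩

theorem stmt_11 (n : ℕ) (w : Fin n → Fin n → ℝ) (γ : ℝ) (α : ℕ)
    (hγ : 0 < γ) (hα : 0 < α)
    (hsym : ∀ u v, w u v = w v u) (hnonneg : ∀ u v, 0 ≤ w u v)
    (hdiag : ∀ u, w u u = 0)
    (hweights : ∀ u v, 0 < w u v → γ ≤ w u v ∧ w u v < 2 * γ)
    (x : Fin n → ℝ) :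
    (∑ ω : Fin n → Fin α → Fin n, sampleProb w γ α ω * estI w γ α x ω) = qform w x ∧
      (∑ ω : Fin n → Fin α → Fin n,
          sampleProb w γ α ω * (estI w γ α x ω - qform w x) ^ 2)
        ≤ 2 / (α : ℝ) ^ 2 * (∑ u, wdeg w u * x u ^ 2) ^ 2 :=
  stmt_11_general hα hsym hnonneg zero_le_two
    (fun u v => (hnonneg u v).eq_or_lt.elim (fun h => h ▸ by positivity)
      fun h => (hweights u v h).2.le) x
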